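/- arXiv:2006.15671 — 4 statements merged into one kernel-verified Lean document; each statement's English description precedes it below -/
import Mathlib

section
/- Fix 0 < ε < 1. There exists a constant C = C(ε) > 0 such that for every nonzero integer k, every integer q with |q| ≥ |k|^ε, and every real ρ ≥ 1, the number of integer divisors r of k satisfying |r − q| ≤ ρ is at most C·ρ^ε. -/
/-!
Divisors of `k` near `q` have small pairwise gcds, since a common divisor of `r` and `s` divides
`r - s`. The product of `m` such divisors is therefore at most `lcm * (2ρ) ^ (m choose 2)`, and
their lcm is at most `|k|`. If `ρ` is at most a small power of `|k|`, each of them has size at least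
`|k| ^ ε / 2`, so `m ε > 2` is impossible and the count is bounded in terms of `ε`. If `ρ` exceeds
that power of `|k|`, the divisor bound `τ(k) = O(|k| ^ η)`, `η > 0`, already gives `O(ρ ^ ε)`.
-/

open Finset

section DivisorBound

lemma natCast_add_one_le_div_mul_pow {b : ℝ} (hb : 1 < b) (a : ℕ) :
    (a : ℝ) + 1 ≤ b / (b - 1) * b ^ a := by
  have bernoulli : 1 + ((a + 1 : ℕ) : ℝ) * (b - 1) ≤ b ^ (a + 1) :=
    one_add_mul_sub_le_pow (by linarith) (a + 1)
  rw [div_mul_eq_mul_div, le_div_iff₀ (sub_pos.mpr hb), ← pow_succ']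
  push_cast at bernoulli
  linarith

lemma natCast_add_one_le_pow {b : ℝ} (hb : 2 ≤ b) (a : ℕ) : (a : ℝ) + 1 ≤ b ^ a := by
  have bernoulli : 1 + a * (b - 1) ≤ b ^ a := one_add_mul_sub_le_pow (by linarith) a
  nlinarith [a.cast_nonneg (α := ℝ)]

lemma natCast_rpow_eq_prod_primeFactors {n : ℕ} (hn : n ≠ 0) (ε : ℝ) :
    (n : ℝ) ^ ε = ∏ p ∈ n.primeFactors, ((p : ℝ) ^ ε) ^ n.factorization p := by
  have factored : (n : ℝ) = ∏ p ∈ n.primeFactors, (p : ℝ) ^ n.factorization p := by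
    exact_mod_cast (Nat.prod_factorization_pow_eq_self hn).symm
  rw [factored, ← Real.finsetProd_rpow _ _ fun p _ ↦ by positivity]
  exact prod_congr rfl fun p _ ↦ (Real.rpow_pow_comm p.cast_nonneg _ _).symm

lemma prod_ite_lt_le_pow {A : ℝ} (hA : 1 ≤ A) (s : Finset ℕ) (P : ℕ) :
    ∏ p ∈ s, (if p < P then A else 1) ≤ A ^ P := by
  have card_filter_lt : #{p ∈ s | p < P} ≤ P := by
    simpa using card_le_card (show {p ∈ s | p < P} ⊆ range P by grind)
  rw [prod_ite, prod_const, prod_const_one, mul_one]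
  exact pow_le_pow_right₀ hA card_filter_lt

theorem exists_card_divisors_le_mul_rpow {ε : ℝ} (hε : 0 < ε) :
    ∃ C > 0, ∀ n : ℕ, (#n.divisors : ℝ) ≤ C * (n : ℝ) ^ ε := by
  set b : ℝ := 2 ^ ε
  have hb : 1 < b := Real.one_lt_rpow one_lt_two hε
  have hA : 1 ≤ b / (b - 1) := (one_le_div (sub_pos.mpr hb)).mpr (by linarith)
  obtain ⟨P, hP⟩ := exists_nat_ge ((2 : ℝ) ^ ε⁻¹)
  refine ⟨(b / (b - 1)) ^ P, by positivity, fun n ↦ ?_⟩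
  rcases eq_or_ne n 0 with rfl | hn
  · simp [Real.zero_rpow hε.ne']
  have local_factor_le (p : ℕ) (hp : p ∈ n.primeFactors) : (n.factorization p : ℝ) + 1 ≤
      (if p < P then b / (b - 1) else 1) * ((p : ℝ) ^ ε) ^ n.factorization p := by
    split_ifs with hpP
    · have two_le : (2 : ℝ) ≤ p := by exact_mod_cast (Nat.prime_of_mem_primeFactors hp).two_le
      have b_le : b ≤ (p : ℝ) ^ ε := Real.rpow_le_rpow zero_le_two two_le hε.le
      exact (natCast_add_one_le_div_mul_pow hb _).trans (by gcongr)
    · have le_p : (2 : ℝ) ^ ε⁻¹ ≤ p := hP.trans (by exact_mod_cast not_lt.mp hpP)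
      rw [one_mul]
      exact natCast_add_one_le_pow
        ((Real.rpow_inv_le_iff_of_pos zero_le_two p.cast_nonneg hε).mp le_p) _
  calc (#n.divisors : ℝ)
    _ = ∏ p ∈ n.primeFactors, ((n.factorization p : ℝ) + 1) := by
      rw [Nat.card_divisors hn]; push_cast; rfl
    _ ≤ ∏ p ∈ n.primeFactors,
        (if p < P then b / (b - 1) else 1) * ((p : ℝ) ^ ε) ^ n.factorization p :=
      prod_le_prod (fun p _ ↦ by positivity) local_factor_le
    _ = (∏ p ∈ n.primeFactors, if p < P then b / (b - 1) else 1) * (n : ℝ) ^ ε := by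
      rw [prod_mul_distrib, natCast_rpow_eq_prod_primeFactors hn]
    _ ≤ (b / (b - 1)) ^ P * (n : ℝ) ^ ε := by
      gcongr; exact prod_ite_lt_le_pow hA _ P

lemma card_le_two_mul_card_divisors_natAbs {k : ℤ} (hk : k ≠ 0) {S : Finset ℤ}
    (hS : ∀ r ∈ S, r ∣ k) : #S ≤ 2 * #k.natAbs.divisors := by
  have image_subset : S.image Int.natAbs ⊆ k.natAbs.divisors := image_subset_iff.mpr fun r hr ↦
    Nat.mem_divisors.mpr ⟨Int.natAbs_dvd_natAbs.mpr (hS r hr), Int.natAbs_ne_zero.mpr hk⟩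
  have card_fiber_le (n : ℕ) (_ : n ∈ S.image Int.natAbs) : #{r ∈ S | r.natAbs = n} ≤ 2 :=
    (card_le_card (t := {(n : ℤ), -(n : ℤ)}) fun r hr ↦ by grind).trans card_le_two
  exact (card_le_mul_card_image S 2 card_fiber_le).trans (by gcongr)

lemma finite_setOf_int_dvd {k : ℤ} (hk : k ≠ 0) : {r : ℤ | r ∣ k}.Finite :=
  (Set.finite_Icc (-|k|) |k|).subset fun _ hr ↦
    abs_le.mp (Int.le_of_dvd (abs_pos.mpr hk) ((abs_dvd_abs _ _).mpr hr))

lemma exists_card_le_mul_rpow_of_abs_le_pow {ε : ℝ} (hε : 0 < ε) {M : ℕ} (hM : M ≠ 0) :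
    ∃ C > 0, ∀ k : ℤ, k ≠ 0 → ∀ x : ℝ, 0 ≤ x → |(k : ℝ)| ≤ x ^ M →
      ∀ S : Finset ℤ, (∀ r ∈ S, r ∣ k) → (#S : ℝ) ≤ C * x ^ ε := by
  obtain ⟨C, hC, card_divisors_le⟩ :=
    exists_card_divisors_le_mul_rpow (div_pos hε (Nat.cast_pos.mpr (Nat.pos_of_ne_zero hM)))
  refine ⟨2 * C, by positivity, fun k hk x hx hkx S hS ↦ ?_⟩
  calc (#S : ℝ)
    _ ≤ 2 * #k.natAbs.divisors := by exact_mod_cast card_le_two_mul_card_divisors_natAbs hk hS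
    _ ≤ 2 * (C * (k.natAbs : ℝ) ^ (ε / M)) := by gcongr; exact card_divisors_le _
    _ = 2 * C * |(k : ℝ)| ^ (ε / M) := by rw [Nat.cast_natAbs, Int.cast_abs, mul_assoc]
    _ ≤ 2 * C * (x ^ M) ^ (ε / M) := by gcongr
    _ = 2 * C * x ^ ε := by
      rw [← Real.rpow_natCast_mul hx, mul_div_cancel₀ _ (Nat.cast_ne_zero.mpr hM)]

end DivisorBound

section CloseDivisors

lemma gcd_prod_dvd_prod_gcd {α ι : Type*} [CommMonoidWithZero α] [GCDMonoid α]
    (a : α) (s : Finset ι) (f : ι → α) : gcd a (∏ i ∈ s, f i) ∣ ∏ i ∈ s, gcd a (f i) := by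
  classical
  induction s using Finset.induction_on with
  | empty => simp
  | insert i s hi ih =>
    rw [prod_insert hi, prod_insert hi]
    exact (gcd_mul_dvd_mul_gcd _ _ _).trans (mul_dvd_mul_left _ ih)

lemma gcd_lcm_le_pow_card {ι : Type*} {s : Finset ι} {f : ι → ℕ} {a G : ℕ} (ha : a ≠ 0)
    (hG : ∀ i ∈ s, a.gcd (f i) ≤ G) : a.gcd (s.lcm f) ≤ G ^ #s := by
  have gcd_dvd : a.gcd (s.lcm f) ∣ ∏ i ∈ s, a.gcd (f i) :=
    (Nat.gcd_dvd_gcd_of_dvd_right a (s.lcm_dvd_prod f)).trans (gcd_prod_dvd_prod_gcd a s f)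
  have prod_gcd_pos : 0 < ∏ i ∈ s, a.gcd (f i) :=
    prod_pos fun i _ ↦ Nat.gcd_pos_of_pos_left _ (Nat.pos_of_ne_zero ha)
  exact (Nat.le_of_dvd prod_gcd_pos gcd_dvd).trans (prod_le_pow_card s _ G hG)

lemma succ_choose_two (n : ℕ) : (n + 1).choose 2 = n + n.choose 2 := by
  rw [Nat.choose_succ_succ' n 1, Nat.choose_one_right]

lemma prod_le_lcm_mul_pow_choose_two {ι : Type*} {s : Finset ι} {f : ι → ℕ} {G : ℕ}
    (hG : (s : Set ι).Pairwise fun i j ↦ (f i).gcd (f j) ≤ G) :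
    ∏ i ∈ s, f i ≤ s.lcm f * G ^ (#s).choose 2 := by
  classical
  induction s using Finset.induction_on with
  | empty => simp
  | insert i s hi ih =>
    rcases eq_or_ne (f i) 0 with hfi | hfi
    · simp [prod_insert hi, hfi]
    have prod_le := ih (hG.mono (by simp))
    have gcd_le : (f i).gcd (s.lcm f) ≤ G ^ #s := gcd_lcm_le_pow_card hfi fun j hj ↦
      hG (by simp) (by simp [hj]) (ne_of_mem_of_not_mem hj hi).symm
    rw [prod_insert hi, lcm_insert, card_insert_of_notMem hi, succ_choose_two]
    calc f i * ∏ j ∈ s, f j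
      _ ≤ f i * (s.lcm f * G ^ (#s).choose 2) := by gcongr
      _ = (f i).gcd (s.lcm f) * (f i).lcm (s.lcm f) * G ^ (#s).choose 2 := by
        rw [Nat.gcd_mul_lcm, mul_assoc]
      _ ≤ G ^ #s * (f i).lcm (s.lcm f) * G ^ (#s).choose 2 := by gcongr
      _ = (f i).lcm (s.lcm f) * G ^ (#s + (#s).choose 2) := by ring

lemma gcd_natAbs_le_natAbs_sub {r s : ℤ} (hrs : r ≠ s) :
    r.natAbs.gcd s.natAbs ≤ (r - s).natAbs :=
  Nat.le_of_dvd (Int.natAbs_pos.mpr (sub_ne_zero.mpr hrs))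
    (Int.natCast_dvd.mp (dvd_sub (Int.gcd_dvd_left r s) (Int.gcd_dvd_right r s)))

lemma prod_abs_le_abs_mul_pow_choose_two {k : ℤ} (hk : k ≠ 0) {S : Finset ℤ} {D : ℝ} (hD : 0 ≤ D)
    (hdvd : ∀ r ∈ S, r ∣ k) (hclose : (S : Set ℤ).Pairwise fun r s ↦ |(r : ℝ) - s| ≤ D) :
    ∏ r ∈ S, |(r : ℝ)| ≤ |(k : ℝ)| * D ^ (#S).choose 2 := by
  have gcd_le : (S : Set ℤ).Pairwise fun r s ↦ r.natAbs.gcd s.natAbs ≤ ⌊D⌋₊ :=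
    fun r hr s hs hrs ↦ (gcd_natAbs_le_natAbs_sub hrs).trans <| Nat.le_floor <| by
      simpa [Nat.cast_natAbs] using hclose hr hs hrs
  have lcm_le : S.lcm Int.natAbs ≤ k.natAbs := Nat.le_of_dvd (Int.natAbs_pos.mpr hk) <|
    lcm_dvd fun r hr ↦ Int.natAbs_dvd_natAbs.mpr (hdvd r hr)
  calc ∏ r ∈ S, |(r : ℝ)|
    _ = (∏ r ∈ S, r.natAbs : ℕ) := by simp [Nat.cast_natAbs]
    _ ≤ (k.natAbs * ⌊D⌋₊ ^ (#S).choose 2 : ℕ) := by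
      exact_mod_cast (prod_le_lcm_mul_pow_choose_two gcd_le).trans (by gcongr)
    _ = |(k : ℝ)| * (⌊D⌋₊ : ℝ) ^ (#S).choose 2 := by simp [Nat.cast_natAbs]
    _ ≤ |(k : ℝ)| * D ^ (#S).choose 2 := by gcongr; exact Nat.floor_le hD

lemma abs_div_two_pow_card_le_abs_mul_pow_choose_two {k : ℤ} (hk : k ≠ 0) {S : Finset ℤ} {q ρ : ℝ}
    (hρ : 0 ≤ ρ) (hρq : 2 * ρ ≤ |q|) (hdvd : ∀ r ∈ S, r ∣ k)
    (hnear : ∀ r ∈ S, |(r : ℝ) - q| ≤ ρ) :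
    (|q| / 2) ^ #S ≤ |(k : ℝ)| * (2 * ρ) ^ (#S).choose 2 := by
  have half_le_abs (r : ℤ) (hr : r ∈ S) : |q| / 2 ≤ |(r : ℝ)| := by
    linarith [abs_sub_abs_le_abs_sub q r, abs_sub_comm q r, hnear r hr]
  have close : (S : Set ℤ).Pairwise fun r s ↦ |(r : ℝ) - s| ≤ 2 * ρ := fun r hr s hs _ ↦ by
    linarith [abs_sub_le (r : ℝ) q s, abs_sub_comm q s, hnear r hr, hnear s hs]
  calc (|q| / 2) ^ #S
    _ = ∏ _r ∈ S, |q| / 2 := (prod_const _).symm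
    _ ≤ ∏ r ∈ S, |(r : ℝ)| := by gcongr with r hr; exact half_le_abs r hr
    _ ≤ |(k : ℝ)| * (2 * ρ) ^ (#S).choose 2 :=
      prod_abs_le_abs_mul_pow_choose_two hk (by positivity) hdvd close

lemma card_ne_of_two_mul_pow_le_abs {ε q ρ : ℝ} {k : ℤ} {m : ℕ} {S : Finset ℤ} (hm : 2 < m * ε)
    (hq : |(k : ℝ)| ^ ε ≤ |q|) (hρ : 1 ≤ ρ) (hk : (2 * ρ) ^ (m + 1).choose 2 ≤ |(k : ℝ)|)
    (hdvd : ∀ r ∈ S, r ∣ k) (hnear : ∀ r ∈ S, |(r : ℝ) - q| ≤ ρ) : #S ≠ m := by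
  rintro rfl
  set m := #S
  set K := |(k : ℝ)|
  have hm0 : m ≠ 0 := by intro h; norm_num [h] at hm
  rw [succ_choose_two] at hk
  have one_lt_K : 1 < K := (one_lt_pow₀ (by linarith) (by omega)).trans_le hk
  have hk0 : k ≠ 0 := by rintro rfl; norm_num [K] at one_lt_K
  have sq_lt : K ^ 2 < |q| ^ m := calc
    K ^ 2 < K ^ (ε * m) := by
      rw [← Real.rpow_natCast]
      exact Real.rpow_lt_rpow_of_exponent_lt one_lt_K (by push_cast; linarith)
    _ = (K ^ ε) ^ m := Real.rpow_mul_natCast (abs_nonneg _) ε m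
    _ ≤ |q| ^ m := by gcongr
  have two_mul_lt : 2 * ρ < |q| := by
    refine lt_of_pow_lt_pow_left₀ m (abs_nonneg q) ?_
    calc (2 * ρ) ^ m
      _ ≤ (2 * ρ) ^ (m + m.choose 2) := pow_le_pow_right₀ (by linarith) (by omega)
      _ ≤ K := hk
      _ ≤ K ^ 2 := le_self_pow₀ one_lt_K.le two_ne_zero
      _ < |q| ^ m := sq_lt
  refine sq_lt.not_ge ?_
  calc |q| ^ m
    _ = 2 ^ m * (|q| / 2) ^ m := by rw [← mul_pow, mul_div_cancel₀ _ two_ne_zero]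
    _ ≤ (2 * ρ) ^ m * (K * (2 * ρ) ^ m.choose 2) := by
      gcongr
      · linarith
      · exact abs_div_two_pow_card_le_abs_mul_pow_choose_two hk0 (by linarith) two_mul_lt.le
          hdvd hnear
    _ = K * (2 * ρ) ^ (m + m.choose 2) := by ring
    _ ≤ K ^ 2 := by rw [sq]; gcongr

lemma card_lt_of_two_mul_pow_le_abs {ε q ρ : ℝ} {k : ℤ} {m : ℕ} {S : Finset ℤ} (hm : 2 < m * ε)
    (hq : |(k : ℝ)| ^ ε ≤ |q|) (hρ : 1 ≤ ρ) (hk : (2 * ρ) ^ (m + 1).choose 2 ≤ |(k : ℝ)|)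
    (hdvd : ∀ r ∈ S, r ∣ k) (hnear : ∀ r ∈ S, |(r : ℝ) - q| ≤ ρ) : #S < m := by
  by_contra! hmS
  obtain ⟨T, hTS, hT⟩ := exists_subset_card_eq hmS
  exact card_ne_of_two_mul_pow_le_abs hm hq hρ hk (fun r hr ↦ hdvd r (hTS hr))
    (fun r hr ↦ hnear r (hTS hr)) hT

end CloseDivisors

theorem divisor_counting_general {ε : ℝ} (hε : 0 < ε) :
    ∃ C > 0, ∀ k : ℤ, k ≠ 0 → ∀ q : ℝ, |(k : ℝ)| ^ ε ≤ |q| → ∀ ρ : ℝ, 1 ≤ ρ →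
      {r : ℤ | r ∣ k ∧ |(r : ℝ) - q| ≤ ρ}.Finite ∧
      ({r : ℤ | r ∣ k ∧ |(r : ℝ) - q| ≤ ρ}.ncard : ℝ) ≤ C * ρ ^ ε := by
  obtain ⟨m, hm⟩ := exists_nat_gt (2 / ε)
  rw [div_lt_iff₀ hε] at hm
  have hm0 : m ≠ 0 := by rintro rfl; norm_num at hm
  set M := (m + 1).choose 2
  have hM : M ≠ 0 := Nat.choose_ne_zero (by omega)
  obtain ⟨C, hC, card_le_of_large_radius⟩ := exists_card_le_mul_rpow_of_abs_le_pow hε hM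
  refine ⟨max (m : ℝ) (C * 2 ^ ε), lt_max_of_lt_right (by positivity), fun k hk q hq ρ hρ ↦ ?_⟩
  have hfin : {r : ℤ | r ∣ k ∧ |(r : ℝ) - q| ≤ ρ}.Finite :=
    (finite_setOf_int_dvd hk).subset fun r hr ↦ hr.1
  refine ⟨hfin, ?_⟩
  rw [Set.ncard_eq_toFinset_card _ hfin]
  have hdvd (r : ℤ) (hr : r ∈ hfin.toFinset) : r ∣ k := (hfin.mem_toFinset.mp hr).1
  have hnear (r : ℤ) (hr : r ∈ hfin.toFinset) : |(r : ℝ) - q| ≤ ρ := (hfin.mem_toFinset.mp hr).2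
  rcases le_total ((2 * ρ) ^ M) |(k : ℝ)| with small_radius | large_radius
  · calc (#hfin.toFinset : ℝ)
      _ ≤ m := by
        exact_mod_cast (card_lt_of_two_mul_pow_le_abs hm hq hρ small_radius hdvd hnear).le
      _ ≤ m * ρ ^ ε := le_mul_of_one_le_right m.cast_nonneg (Real.one_le_rpow hρ hε.le)
      _ ≤ max (m : ℝ) (C * 2 ^ ε) * ρ ^ ε := by gcongr; exact le_max_left _ _
  · calc (#hfin.toFinset : ℝ)
      _ ≤ C * (2 * ρ) ^ ε := card_le_of_large_radius k hk _ (by positivity) large_radius _ hdvd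
      _ = C * 2 ^ ε * ρ ^ ε := by rw [Real.mul_rpow zero_le_two (by positivity), mul_assoc]
      _ ≤ max (m : ℝ) (C * 2 ^ ε) * ρ ^ ε := by gcongr; exact le_max_right _ _

/-- Divisor counting lemma (Lemma 2.2, adapted from Deng–Nahmod–Yue): for `0 < ε < 1` there is a
constant `C = C(ε)` such that for every nonzero integer `k`, every integer `q` with
`|q| ≥ |k|^ε`, and every `ρ ≥ 1`, the number of integer divisors `r` of `k` with `|r − q| ≤ ρ`
is at most `C ρ^ε`. -/
theorem divisor_counting (ε : ℝ) (hε0 : 0 < ε) (hε1 : ε < 1) :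
    ∃ C > 0, ∀ k : ℤ, k ≠ 0 → ∀ q : ℤ, (|k| : ℝ) ^ ε ≤ (|q| : ℝ) → ∀ ρ : ℝ, 1 ≤ ρ →
      {r : ℤ | r ∣ k ∧ (|r - q| : ℝ) ≤ ρ}.Finite ∧
      ({r : ℤ | r ∣ k ∧ (|r - q| : ℝ) ≤ ρ}.ncard : ℝ) ≤ C * ρ ^ ε := by
  obtain ⟨C, hC, hcount⟩ := divisor_counting_general hε0
  exact ⟨C, hC, fun k hk q ↦ hcount k hk q⟩
end

section
/- Let 0 ≤ α ≤ β be reals with α + β > 1 and let ε > 0. Define γ = α + β − 1 if β < 1, γ = α − ε if β = 1, and γ = α if β > 1. Then there exists a constant C > 0 such that for all a, b ∈ ℝ: ∫_ℝ (1+(x−a)²)^{−α/2} (1+(x−b)²)^{−β/2} dx ≤ C·(1+(a−b)²)^{−γ/2}. -/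
open MeasureTheory

/-!
Where `⟨x - a⟩ ≤ ⟨x - b⟩`, exchanging the exponents only increases the integrand, because `α ≤ β`.
The larger bracket is at least `R = ⟨a - b⟩ / 2` and at least the smaller one, so on either half of
the space the integrand is at most a translate of `max ⟨y⟩ R ^ (-α) * ⟨y⟩ ^ (-β)`. For `β` at least
the dimension `d`, the factor `R ^ (-s)` is pulled out, with `s` as close to `α` as integrability of
the remaining power of `⟨y⟩` allows. For `β < d`, the bracket may be replaced by the norm, and
rescaling by `R` gives the exact power `R ^ (d - α - β)`. For negative `α` Peetre's inequality
suffices.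
-/

/-- The Japanese bracket `⟨x⟩ = (1 + ‖x‖²) ^ (1 / 2)`, a smoothed version of `max 1 ‖x‖`. It is
written `⟪x⟫` below, since `⟨x⟩` is Lean's anonymous constructor. -/
noncomputable def japaneseBracket {E : Type*} [Norm E] (x : E) : ℝ := √(1 + ‖x‖ ^ 2)

local notation "⟪" x "⟫" => japaneseBracket x

section Bracket

lemma japaneseBracket_rpow {E : Type*} [Norm E] (x : E) (r : ℝ) :
    ⟪x⟫ ^ r = (1 + ‖x‖ ^ 2) ^ (r / 2) := by
  rw [japaneseBracket, Real.sqrt_eq_rpow, ← Real.rpow_mul (by positivity), one_div_mul_eq_div]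

lemma one_le_japaneseBracket {E : Type*} [Norm E] (x : E) : 1 ≤ ⟪x⟫ :=
  Real.one_le_sqrt.2 (le_add_of_nonneg_right (sq_nonneg _))

lemma japaneseBracket_pos {E : Type*} [Norm E] (x : E) : 0 < ⟪x⟫ :=
  zero_lt_one.trans_le (one_le_japaneseBracket x)

variable {E : Type*} [SeminormedAddCommGroup E]

lemma norm_le_japaneseBracket (x : E) : ‖x‖ ≤ ⟪x⟫ :=
  Real.le_sqrt_of_sq_le (le_add_of_nonneg_left zero_le_one)

@[fun_prop]
lemma continuous_japaneseBracket : Continuous (japaneseBracket : E → ℝ) := by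
  unfold japaneseBracket
  fun_prop

lemma japaneseBracket_sub_le (x y : E) : ⟪x - y⟫ ≤ ⟪x⟫ + ⟪y⟫ := by
  have sq_bracket (z : E) : ⟪z⟫ ^ 2 = 1 + ‖z‖ ^ 2 := Real.sq_sqrt (by positivity)
  refine Real.sqrt_le_iff.2 ⟨(add_pos (japaneseBracket_pos x) (japaneseBracket_pos y)).le, ?_⟩
  have norm_sq_le : ‖x - y‖ ^ 2 ≤ (‖x‖ + ‖y‖) ^ 2 := by gcongr; exact norm_sub_le x y
  have mul_le : ‖x‖ * ‖y‖ ≤ ⟪x⟫ * ⟪y⟫ :=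
    mul_le_mul (norm_le_japaneseBracket x) (norm_le_japaneseBracket y) (norm_nonneg y)
      (japaneseBracket_pos x).le
  linarith [sq_bracket x, sq_bracket y, add_sq ‖x‖ ‖y‖, add_sq ⟪x⟫ ⟪y⟫]

lemma japaneseBracket_sub_le_two_mul (x y : E) : ⟪x - y⟫ ≤ 2 * ⟪x⟫ * ⟪y⟫ := by
  nlinarith [japaneseBracket_sub_le x y, one_le_japaneseBracket x, one_le_japaneseBracket y]

lemma japaneseBracket_sub_rpow_mul_le_of_nonpos {α β : ℝ} (hα : α ≤ 0) (u v : E) :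
    ⟪u - v⟫ ^ (-α) * ⟪u⟫ ^ (-β) ≤ 2 ^ (-α) * ⟪v⟫ ^ (-α) * ⟪u⟫ ^ (-(α + β)) := by
  have hu := japaneseBracket_pos u
  have hv := japaneseBracket_pos v
  have huv := japaneseBracket_pos (u - v)
  calc ⟪u - v⟫ ^ (-α) * ⟪u⟫ ^ (-β) ≤ (2 * ⟪u⟫ * ⟪v⟫) ^ (-α) * ⟪u⟫ ^ (-β) := by
        gcongr
        · exact neg_nonneg.2 hα
        · exact japaneseBracket_sub_le_two_mul u v
    _ = 2 ^ (-α) * ⟪v⟫ ^ (-α) * ⟪u⟫ ^ (-(α + β)) := by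
        rw [Real.mul_rpow (by positivity) hv.le, Real.mul_rpow zero_le_two hu.le, neg_add,
          Real.rpow_add hu]
        ring

end Bracket

lemma rpow_neg_mul_rpow_neg_le_swap {A B α β : ℝ} (hA : 0 < A) (hAB : A ≤ B) (hαβ : α ≤ β) :
    A ^ (-α) * B ^ (-β) ≤ B ^ (-α) * A ^ (-β) := by
  have hB : 0 < B := hA.trans_le hAB
  have rpow_split {X : ℝ} (hX : 0 < X) : X ^ (-α) = X ^ (β - α) * X ^ (-β) := by
    rw [← Real.rpow_add hX]; ring_nf
  calc A ^ (-α) * B ^ (-β) = A ^ (β - α) * (A ^ (-β) * B ^ (-β)) := by rw [rpow_split hA]; ring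
    _ ≤ B ^ (β - α) * (A ^ (-β) * B ^ (-β)) := by gcongr
    _ = B ^ (-α) * A ^ (-β) := by rw [rpow_split hB]; ring

/-- The kernel `max ⟨y⟩ R ^ (-α) * ⟨y⟩ ^ (-β)`, which dominates `⟨x - a⟩ ^ (-α) * ⟨x - b⟩ ^ (-β)`
when `y` is the smaller of `x - a` and `x - b` and `R = ⟨a - b⟩ / 2`. -/
noncomputable def bracketKernel {E : Type*} [Norm E] (α β R : ℝ) (y : E) : ℝ :=
  max ⟪y⟫ R ^ (-α) * ⟪y⟫ ^ (-β)

section Kernel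

variable {E : Type*} [SeminormedAddCommGroup E] {α β : ℝ}

lemma bracketKernel_nonneg (α β R : ℝ) (y : E) : 0 ≤ bracketKernel α β R y := by
  have hy := japaneseBracket_pos y
  unfold bracketKernel
  positivity

lemma continuous_bracketKernel (α β R : ℝ) :
    Continuous (bracketKernel α β R : E → ℝ) := by
  unfold bracketKernel
  refine .mul (.rpow_const (by fun_prop) fun y => .inl ?_)
    (.rpow_const (by fun_prop) fun y => .inl (japaneseBracket_pos y).ne')
  exact (lt_max_of_lt_left (japaneseBracket_pos y)).ne'

lemma rpow_neg_mul_le_bracketKernel (hα : 0 ≤ α) {R : ℝ} {u v : E} (huv : ⟪u⟫ ≤ ⟪v⟫)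
    (hR : R ≤ ⟪v⟫) : ⟪v⟫ ^ (-α) * ⟪u⟫ ^ (-β) ≤ bracketKernel α β R u := by
  have hu := japaneseBracket_pos u
  unfold bracketKernel
  gcongr ?_ * _
  exact Real.rpow_le_rpow_of_nonpos (lt_max_of_lt_left hu) (max_le huv hR) (neg_nonpos.2 hα)

lemma japaneseBracket_rpow_mul_le_add_bracketKernel (hα : 0 ≤ α) (hαβ : α ≤ β) (u v : E) :
    ⟪u⟫ ^ (-α) * ⟪v⟫ ^ (-β) ≤
      bracketKernel α β (⟪v - u⟫ / 2) u + bracketKernel α β (⟪v - u⟫ / 2) v := by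
  have bracket_sub_le := japaneseBracket_sub_le v u
  rcases le_total ⟪u⟫ ⟪v⟫ with huv | hvu
  · calc ⟪u⟫ ^ (-α) * ⟪v⟫ ^ (-β) ≤ ⟪v⟫ ^ (-α) * ⟪u⟫ ^ (-β) :=
          rpow_neg_mul_rpow_neg_le_swap (japaneseBracket_pos u) huv hαβ
      _ ≤ bracketKernel α β (⟪v - u⟫ / 2) u :=
          rpow_neg_mul_le_bracketKernel hα huv (by linarith)
      _ ≤ _ := le_add_of_nonneg_right (bracketKernel_nonneg ..)
  · exact (rpow_neg_mul_le_bracketKernel hα hvu (by linarith)).trans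
      (le_add_of_nonneg_left (bracketKernel_nonneg ..))

lemma bracketKernel_le_rpow_mul {s R : ℝ} (hs : 0 ≤ s) (hsα : s ≤ α) (hR : 0 < R) (y : E) :
    bracketKernel α β R y ≤ R ^ (-s) * ⟪y⟫ ^ (-(α + β - s)) := by
  have hy := japaneseBracket_pos y
  have hmax : 0 < max ⟪y⟫ R := lt_max_of_lt_left hy
  calc bracketKernel α β R y
      = max ⟪y⟫ R ^ (-s) * max ⟪y⟫ R ^ (-(α - s)) * ⟪y⟫ ^ (-β) := by
        rw [bracketKernel, ← Real.rpow_add hmax]; ring_nf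
    _ ≤ R ^ (-s) * ⟪y⟫ ^ (-(α - s)) * ⟪y⟫ ^ (-β) := by
        gcongr ?_ * ?_ * _
        · exact Real.rpow_le_rpow_of_nonpos hR (le_max_right ..) (by linarith)
        · exact Real.rpow_le_rpow_of_nonpos hy (le_max_left ..) (by linarith)
    _ = R ^ (-s) * ⟪y⟫ ^ (-(α + β - s)) := by
        rw [mul_assoc, ← Real.rpow_add hy]; ring_nf

end Kernel

lemma bracketKernel_le_rescaled {E : Type*} [NormedAddCommGroup E] [NormedSpace ℝ E]
    {α β R : ℝ} (hα : 0 ≤ α) (hβ : 0 ≤ β) (hR : 0 < R) {y : E} (hy : y ≠ 0) :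
    bracketKernel α β R y ≤
      R ^ (-(α + β)) * (max ‖R⁻¹ • y‖ 1 ^ (-α) * ‖R⁻¹ • y‖ ^ (-β)) := by
  have hy_pos : 0 < ‖y‖ := norm_pos_iff.2 hy
  have hmax : 0 < max ‖y‖ R := lt_max_of_lt_right hR
  have norm_eq : R * ‖R⁻¹ • y‖ = ‖y‖ := by
    rw [norm_smul, norm_inv, Real.norm_of_nonneg hR.le, mul_inv_cancel_left₀ hR.ne']
  have max_eq : R * max ‖R⁻¹ • y‖ 1 = max ‖y‖ R := by
    rw [mul_max_of_nonneg _ _ hR.le, norm_eq, mul_one]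
  calc bracketKernel α β R y ≤ max ‖y‖ R ^ (-α) * ‖y‖ ^ (-β) := by
        unfold bracketKernel
        have norm_le := norm_le_japaneseBracket y
        have hbracket := japaneseBracket_pos y
        gcongr ?_ * ?_
        · exact Real.rpow_le_rpow_of_nonpos hmax (max_le_max_right R norm_le) (neg_nonpos.2 hα)
        · exact Real.rpow_le_rpow_of_nonpos hy_pos norm_le (neg_nonpos.2 hβ)
    _ = R ^ (-(α + β)) * (max ‖R⁻¹ • y‖ 1 ^ (-α) * ‖R⁻¹ • y‖ ^ (-β)) := by
        rw [← max_eq, ← norm_eq, Real.mul_rpow hR.le (by positivity),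
          Real.mul_rpow hR.le (by positivity), neg_add, Real.rpow_add hR]
        ring

section Integral

variable {E : Type*} [NormedAddCommGroup E] [NormedSpace ℝ E] [FiniteDimensional ℝ E]
  [MeasurableSpace E] [BorelSpace E] (μ : Measure E) [μ.IsAddHaarMeasure] {α β : ℝ}

lemma integrable_japaneseBracket_rpow_neg {r : ℝ} (hr : Module.finrank ℝ E < r) :
    Integrable (fun x : E => ⟪x⟫ ^ (-r)) μ := by
  simpa only [japaneseBracket_rpow] using integrable_rpow_neg_one_add_norm_sq hr

lemma integrable_bracketKernel (hα : 0 ≤ α) (hsum : Module.finrank ℝ E < α + β) {R : ℝ}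
    (hR : 0 < R) : Integrable (bracketKernel α β R : E → ℝ) μ := by
  refine (integrable_japaneseBracket_rpow_neg μ hsum).mono'
    (continuous_bracketKernel α β R).aestronglyMeasurable (.of_forall fun y => ?_)
  rw [Real.norm_of_nonneg (bracketKernel_nonneg ..)]
  simpa using bracketKernel_le_rpow_mul (β := β) le_rfl hα hR y

lemma integral_japaneseBracket_rpow_mul_le (hα : 0 ≤ α) (hαβ : α ≤ β)
    (hsum : Module.finrank ℝ E < α + β) (a b : E) :
    ∫ x, ⟪x - a⟫ ^ (-α) * ⟪x - b⟫ ^ (-β) ∂μ ≤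
      2 * ∫ y, bracketKernel α β (⟪a - b⟫ / 2) y ∂μ := by
  have kernel_integrable : Integrable (bracketKernel α β (⟪a - b⟫ / 2) : E → ℝ) μ :=
    integrable_bracketKernel μ hα hsum (half_pos (japaneseBracket_pos _))
  have integrable_a := kernel_integrable.comp_sub_right a
  have integrable_b := kernel_integrable.comp_sub_right b
  calc ∫ x, ⟪x - a⟫ ^ (-α) * ⟪x - b⟫ ^ (-β) ∂μ
      ≤ ∫ x, (bracketKernel α β (⟪a - b⟫ / 2) (x - a) +
          bracketKernel α β (⟪a - b⟫ / 2) (x - b)) ∂μ := by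
        refine integral_mono_of_nonneg (.of_forall fun x => ?_) (integrable_a.add integrable_b)
          (.of_forall fun x => ?_)
        · have := japaneseBracket_pos (x - a)
          have := japaneseBracket_pos (x - b)
          positivity
        · simpa only [sub_sub_sub_cancel_left] using
            japaneseBracket_rpow_mul_le_add_bracketKernel hα hαβ (x - a) (x - b)
    _ = 2 * ∫ y, bracketKernel α β (⟪a - b⟫ / 2) y ∂μ := by
        rw [integral_add integrable_a integrable_b, integral_sub_right_eq_self,
          integral_sub_right_eq_self, two_mul]

lemma integral_bracketKernel_le_rpow_mul {s R : ℝ} (hs : 0 ≤ s) (hsα : s ≤ α)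
    (hr : Module.finrank ℝ E < α + β - s) (hR : 0 < R) :
    ∫ y : E, bracketKernel α β R y ∂μ ≤ (∫ y : E, ⟪y⟫ ^ (-(α + β - s)) ∂μ) * R ^ (-s) := by
  rw [mul_comm, ← integral_const_mul]
  exact integral_mono_of_nonneg (.of_forall (bracketKernel_nonneg α β R))
    ((integrable_japaneseBracket_rpow_neg μ hr).const_mul _)
    (.of_forall (bracketKernel_le_rpow_mul hs hsα hR))

lemma integrable_max_norm_one_rpow_mul_norm_rpow [Nontrivial E] (hβ : β < Module.finrank ℝ E)
    (hsum : Module.finrank ℝ E < α + β) :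
    Integrable (fun x : E => max ‖x‖ 1 ^ (-α) * ‖x‖ ^ (-β)) μ := by
  rw [integrable_fun_norm_addHaar μ (f := fun t => max t 1 ^ (-α) * t ^ (-β))]
  have pow_mul_rpow {t : ℝ} (ht : 0 < t) (r : ℝ) :
      t ^ (Module.finrank ℝ E - 1) * t ^ r = t ^ (Module.finrank ℝ E - 1 + r : ℝ) := by
    rw [Real.rpow_add ht, ← Nat.cast_pred Module.finrank_pos, Real.rpow_natCast]
  have near_zero : IntegrableOn (fun t : ℝ => t ^ (Module.finrank ℝ E - 1 + -β : ℝ))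
      (Set.Ioc 0 1) :=
    (intervalIntegrable_iff_integrableOn_Ioc_of_le zero_le_one).1
      (intervalIntegral.intervalIntegrable_rpow' (by linarith))
  have near_infinity : IntegrableOn (fun t : ℝ => t ^ (Module.finrank ℝ E - 1 + (-α + -β) : ℝ))
      (Set.Ioi 1) :=
    integrableOn_Ioi_rpow_of_lt (by linarith) one_pos
  rw [← Set.Ioc_union_Ioi_eq_Ioi zero_le_one]
  refine .union (near_zero.congr_fun (fun t ht => ?_) measurableSet_Ioc)
    (near_infinity.congr_fun (fun t ht => ?_) measurableSet_Ioi)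
  · simp [max_eq_right ht.2, pow_mul_rpow ht.1]
  · have ht_pos : 0 < t := one_pos.trans ht
    simp [max_eq_left (Set.mem_Ioi.1 ht).le, ← pow_mul_rpow ht_pos, Real.rpow_add ht_pos]

lemma integral_bracketKernel_le_of_lt_finrank [Nontrivial E] {R : ℝ} (hα : 0 ≤ α) (hβ : 0 ≤ β)
    (hβ_lt : β < Module.finrank ℝ E) (hsum : Module.finrank ℝ E < α + β) (hR : 0 < R) :
    ∫ y : E, bracketKernel α β R y ∂μ ≤
      (∫ y : E, max ‖y‖ 1 ^ (-α) * ‖y‖ ^ (-β) ∂μ) * R ^ (-(α + β - Module.finrank ℝ E)) := by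
  have profile_integrable := integrable_max_norm_one_rpow_mul_norm_rpow μ hβ_lt hsum
  calc ∫ y : E, bracketKernel α β R y ∂μ
      ≤ ∫ y : E, R ^ (-(α + β)) * (max ‖R⁻¹ • y‖ 1 ^ (-α) * ‖R⁻¹ • y‖ ^ (-β)) ∂μ := by
        refine integral_mono_of_nonneg (.of_forall (bracketKernel_nonneg α β R))
          ((profile_integrable.comp_smul (inv_ne_zero hR.ne')).const_mul _) ?_
        filter_upwards [Measure.ae_ne μ 0] with y hy
        exact bracketKernel_le_rescaled hα hβ hR hy
    _ = R ^ (-(α + β)) *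
          (R ^ Module.finrank ℝ E * ∫ y : E, max ‖y‖ 1 ^ (-α) * ‖y‖ ^ (-β) ∂μ) := by
        rw [integral_const_mul, Measure.integral_comp_inv_smul_of_nonneg μ
          (fun y => max ‖y‖ 1 ^ (-α) * ‖y‖ ^ (-β)) hR.le, smul_eq_mul]
    _ = _ := by
        rw [neg_sub', sub_neg_eq_add, Real.rpow_add hR, Real.rpow_natCast]
        ring

lemma exists_integral_le_of_integral_bracketKernel_le (hα : 0 ≤ α) (hαβ : α ≤ β)
    (hsum : Module.finrank ℝ E < α + β) {γ I : ℝ}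
    (hI : ∀ R > 0, ∫ y, bracketKernel α β R y ∂μ ≤ I * R ^ (-γ)) :
    ∃ C > 0, ∀ a b : E,
      ∫ x, ⟪x - a⟫ ^ (-α) * ⟪x - b⟫ ^ (-β) ∂μ ≤ C * ⟪a - b⟫ ^ (-γ) := by
  refine ⟨2 * max I 1 * 2 ^ γ, by positivity, fun a b => ?_⟩
  have hab := japaneseBracket_pos (a - b)
  calc ∫ x, ⟪x - a⟫ ^ (-α) * ⟪x - b⟫ ^ (-β) ∂μ
      ≤ 2 * ∫ y, bracketKernel α β (⟪a - b⟫ / 2) y ∂μ :=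
        integral_japaneseBracket_rpow_mul_le μ hα hαβ hsum a b
    _ ≤ 2 * (max I 1 * (⟪a - b⟫ / 2) ^ (-γ)) := by
        grw [hI _ (half_pos hab), ← le_max_left I 1]
    _ = 2 * max I 1 * 2 ^ γ * ⟪a - b⟫ ^ (-γ) := by
        rw [Real.div_rpow hab.le zero_le_two, Real.rpow_neg zero_le_two, div_inv_eq_mul]
        ring

lemma exists_integral_japaneseBracket_rpow_mul_le_of_nonpos (hα : α ≤ 0)
    (hsum : Module.finrank ℝ E < α + β) :
    ∃ C > 0, ∀ a b : E,
      ∫ x, ⟪x - a⟫ ^ (-α) * ⟪x - b⟫ ^ (-β) ∂μ ≤ C * ⟪a - b⟫ ^ (-α) := by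
  set I := ∫ x : E, ⟪x⟫ ^ (-(α + β)) ∂μ
  refine ⟨2 ^ (-α) * max I 1, by positivity, fun a b => ?_⟩
  have hab := japaneseBracket_pos (a - b)
  calc ∫ x, ⟪x - a⟫ ^ (-α) * ⟪x - b⟫ ^ (-β) ∂μ
      ≤ ∫ x, 2 ^ (-α) * ⟪a - b⟫ ^ (-α) * ⟪x - b⟫ ^ (-(α + β)) ∂μ := by
        refine integral_mono_of_nonneg (.of_forall fun x => ?_)
          (((integrable_japaneseBracket_rpow_neg μ hsum).comp_sub_right b).const_mul _)
          (.of_forall fun x => ?_)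
        · have := japaneseBracket_pos (x - a)
          have := japaneseBracket_pos (x - b)
          positivity
        · simpa only [sub_sub_sub_cancel_right] using
            japaneseBracket_sub_rpow_mul_le_of_nonpos hα (x - b) (a - b)
    _ = 2 ^ (-α) * ⟪a - b⟫ ^ (-α) * I := by
        rw [integral_const_mul, integral_sub_right_eq_self (fun x : E => ⟪x⟫ ^ (-(α + β))) b]
    _ ≤ 2 ^ (-α) * ⟪a - b⟫ ^ (-α) * max I 1 := by gcongr; exact le_max_left I 1
    _ = 2 ^ (-α) * max I 1 * ⟪a - b⟫ ^ (-α) := by ring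

end Integral

theorem convolution_lemma_general {E : Type*} [NormedAddCommGroup E] [NormedSpace ℝ E]
    [FiniteDimensional ℝ E] [MeasurableSpace E] [BorelSpace E] (μ : Measure E)
    [μ.IsAddHaarMeasure] {α β ε γ : ℝ} (hαβ : α ≤ β) (hsum : Module.finrank ℝ E < α + β)
    (hε : 0 < ε)
    (hγ : γ = if β < Module.finrank ℝ E then α + β - Module.finrank ℝ E
      else if β = Module.finrank ℝ E then α - ε else α) :
    ∃ C > 0, ∀ a b : E,
      ∫ x, ⟪x - a⟫ ^ (-α) * ⟪x - b⟫ ^ (-β) ∂μ ≤ C * ⟪a - b⟫ ^ (-γ) := by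
  rcases lt_trichotomy β (Module.finrank ℝ E) with hβ | hβ | hβ
  · have hα : 0 ≤ α := by linarith
    have : Nontrivial E := Module.finrank_pos_iff (R := ℝ).1 (by rify; linarith)
    rw [hγ, if_pos hβ]
    exact exists_integral_le_of_integral_bracketKernel_le μ hα hαβ hsum fun R hR =>
      integral_bracketKernel_le_of_lt_finrank μ hα (hα.trans hαβ) hβ hsum hR
  · have hα : 0 < α := by linarith
    obtain ⟨C, hC, integral_le⟩ := exists_integral_le_of_integral_bracketKernel_le μ hα.le hαβ
      hsum fun R hR => integral_bracketKernel_le_rpow_mul μ (s := max (α - ε) 0)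
        (le_max_right ..) (max_le (by linarith) hα.le)
        (by linarith [max_lt (show α - ε < α by linarith) hα]) hR
    refine ⟨C, hC, fun a b => (integral_le a b).trans ?_⟩
    rw [hγ, if_neg hβ.not_lt, if_pos hβ]
    gcongr
    exacts [one_le_japaneseBracket _, le_max_left ..]
  · rw [hγ, if_neg hβ.not_gt, if_neg hβ.ne']
    rcases le_total α 0 with hα | hα
    · exact exists_integral_japaneseBracket_rpow_mul_le_of_nonpos μ hα hsum
    · exact exists_integral_le_of_integral_bracketKernel_le μ hα hαβ hsum fun R hR =>
        integral_bracketKernel_le_rpow_mul μ hα le_rfl (by linarith) hR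

/-- The standard convolution lemma (Lemma 2.3):
`∫_ℝ ⟨x−a⟩^{−α}⟨x−b⟩^{−β} dx ≲ ⟨a−b⟩^{−γ}` with `γ = α+β−1` if `β < 1`, `γ = α−ε` if `β = 1`,
and `γ = α` if `β > 1`. -/
theorem convolution_lemma (α β ε γ : ℝ) (hα : 0 ≤ α) (hαβ : α ≤ β) (hsum : 1 < α + β)
    (hε : 0 < ε)
    (hγ : γ = if β < 1 then α + β - 1 else if β = 1 then α - ε else α) :
    ∃ C > 0, ∀ a b : ℝ,
      (∫ x : ℝ, (1 + (x - a) ^ 2) ^ (-(α / 2)) * (1 + (x - b) ^ 2) ^ (-(β / 2))) ≤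
        C * (1 + (a - b) ^ 2) ^ (-(γ / 2)) := by
  simpa [japaneseBracket_rpow, neg_div] using
    convolution_lemma_general (volume : Measure ℝ) hαβ (by simpa using hsum) hε (by simpa using hγ)
end

section
/- Let g be a Schwartz function on ℝ with g(−1) = 0. There exists a constant C > 0 such that for every μ ∈ ℝ and every nonzero integer Φ: |(1/Φ)·g(μ/Φ)| ≤ C·⟨μ+Φ⟩·min(⟨Φ⟩^{−1}, ⟨μ⟩^{−1})². -/
/-!
A Schwartz function `f` with `f a = 0` is Lipschitz near `a` and decays rapidly away from `a`, so
`(1 + ‖x‖²) ‖f x‖ ≤ K ‖x - a‖`. Both sides scale well under `x = t⁻¹ • μ`, which gives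
`(t² + ‖μ‖²) ‖t⁻¹ • f (t⁻¹ • μ)‖ ≤ K ‖μ - t • a‖`. For `|t| ≥ 1` the factor `t² + ‖μ‖²` is
comparable to `1 + t² + ‖μ‖²`, which dominates both `⟨t⟩²` and `⟨μ⟩²`.
-/

open scoped SchwartzMap

section

variable {E F : Type*} [NormedAddCommGroup E] [NormedSpace ℝ E]
  [NormedAddCommGroup F] [NormedSpace ℝ F]

lemma schwartz_exists_norm_sub_le (f : 𝓢(E, F)) :
    ∃ L > 0, ∀ x y, ‖f x - f y‖ ≤ L * ‖x - y‖ := by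
  obtain ⟨L, hL, fderiv_bound⟩ := f.decay 0 1
  simp only [pow_zero, one_mul, norm_iteratedFDeriv_one] at fderiv_bound
  exact ⟨L, hL, fun x y ↦ convex_univ.norm_image_sub_le_of_norm_fderiv_le
    (fun z _ ↦ f.differentiableAt) (fun z _ ↦ fderiv_bound z) trivial trivial⟩

lemma schwartz_exists_one_add_norm_pow_mul_norm_le (f : 𝓢(E, F)) (k : ℕ) :
    ∃ M, ∀ x, (1 + ‖x‖) ^ k * ‖f x‖ ≤ M :=
  ⟨_, fun x ↦ by
    simpa only [norm_iteratedFDeriv_zero] using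
      SchwartzMap.one_add_le_sup_seminorm_apply (𝕜 := ℝ) (m := (k, 0)) le_rfl le_rfl f x⟩

lemma schwartz_exists_one_add_norm_pow_mul_norm_le_mul_norm_sub (f : 𝓢(E, F)) {a : E}
    (hfa : f a = 0) (k : ℕ) :
    ∃ K > 0, ∀ x, (1 + ‖x‖) ^ k * ‖f x‖ ≤ K * ‖x - a‖ := by
  obtain ⟨L, hL, lipschitz⟩ := schwartz_exists_norm_sub_le f
  obtain ⟨M, decay⟩ := schwartz_exists_one_add_norm_pow_mul_norm_le f k
  refine ⟨max ((2 + ‖a‖) ^ k * L) M, lt_max_of_lt_left (by positivity), fun x ↦ ?_⟩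
  rcases le_total ‖x - a‖ 1 with near | far
  · have norm_le : 1 + ‖x‖ ≤ 2 + ‖a‖ := by linarith [norm_le_norm_add_norm_sub' x a]
    have vanishing : ‖f x‖ ≤ L * ‖x - a‖ := by simpa only [hfa, sub_zero] using lipschitz x a
    calc (1 + ‖x‖) ^ k * ‖f x‖ ≤ (2 + ‖a‖) ^ k * (L * ‖x - a‖) := by gcongr
      _ = (2 + ‖a‖) ^ k * L * ‖x - a‖ := by ring
      _ ≤ max ((2 + ‖a‖) ^ k * L) M * ‖x - a‖ := by gcongr; exact le_max_left _ _
  · calc (1 + ‖x‖) ^ k * ‖f x‖ ≤ max ((2 + ‖a‖) ^ k * L) M := (decay x).trans (le_max_right _ _)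
      _ ≤ max ((2 + ‖a‖) ^ k * L) M * ‖x - a‖ := le_mul_of_one_le_right (by positivity) far

lemma sq_add_norm_sq_mul_norm_inv_smul_le {f : E → F} {a : E} {K : ℝ}
    (hf : ∀ x, (1 + ‖x‖ ^ 2) * ‖f x‖ ≤ K * ‖x - a‖) (μ : E) {t : ℝ} (ht : t ≠ 0) :
    (t ^ 2 + ‖μ‖ ^ 2) * ‖t⁻¹ • f (t⁻¹ • μ)‖ ≤ K * ‖μ - t • a‖ := by
  obtain ⟨x, rfl⟩ : ∃ x, μ = t • x := ⟨t⁻¹ • μ, (smul_inv_smul₀ ht μ).symm⟩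
  have abs_t_ne_zero : |t| ≠ 0 := abs_ne_zero.2 ht
  rw [inv_smul_smul₀ ht, ← smul_sub, norm_smul, norm_smul, norm_smul, norm_inv, Real.norm_eq_abs,
    ← sq_abs t]
  calc (|t| ^ 2 + (|t| * ‖x‖) ^ 2) * (|t|⁻¹ * ‖f x‖) = |t| * ((1 + ‖x‖ ^ 2) * ‖f x‖) := by
        field_simp
    _ ≤ |t| * (K * ‖x - a‖) := mul_le_mul_of_nonneg_left (hf x) (abs_nonneg t)
    _ = K * (|t| * ‖x - a‖) := by ring

lemma inv_one_add_sq_add_sq_le_min_inv_sqrt_sq (a b : ℝ) :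
    (1 + a ^ 2 + b ^ 2)⁻¹ ≤ (min (√(1 + a ^ 2))⁻¹ (√(1 + b ^ 2))⁻¹) ^ 2 := by
  rcases min_choice (√(1 + a ^ 2))⁻¹ (√(1 + b ^ 2))⁻¹ with h | h <;>
    rw [h, inv_pow, Real.sq_sqrt (by positivity)] <;>
    exact inv_anti₀ (by positivity) (by linarith [sq_nonneg a, sq_nonneg b])

theorem schwartz_rescaled_bound_general (f : 𝓢(E, F)) {a : E} (hfa : f a = 0) :
    ∃ C > 0, ∀ (μ : E) (t : ℝ), 1 ≤ |t| →
      ‖t⁻¹ • f (t⁻¹ • μ)‖ ≤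
        C * √(1 + ‖μ - t • a‖ ^ 2) * (min (√(1 + t ^ 2))⁻¹ (√(1 + ‖μ‖ ^ 2))⁻¹) ^ 2 := by
  obtain ⟨K, hK, weighted⟩ := schwartz_exists_one_add_norm_pow_mul_norm_le_mul_norm_sub f hfa 2
  have weighted_sq (x : E) : (1 + ‖x‖ ^ 2) * ‖f x‖ ≤ K * ‖x - a‖ :=
    le_trans (by gcongr; nlinarith [norm_nonneg x]) (weighted x)
  refine ⟨2 * K, by positivity, fun μ t ht ↦ ?_⟩
  have t_ne_zero : t ≠ 0 := abs_pos.1 (one_pos.trans_le ht)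
  have one_le_sq : 1 ≤ t ^ 2 := one_le_sq_iff_one_le_abs t |>.2 ht
  have norm_le_bracket : ‖μ - t • a‖ ≤ √(1 + ‖μ - t • a‖ ^ 2) := Real.le_sqrt_of_sq_le (by simp)
  calc ‖t⁻¹ • f (t⁻¹ • μ)‖
      ≤ 2 * K * ‖μ - t • a‖ * (1 + t ^ 2 + ‖μ‖ ^ 2)⁻¹ := by
        rw [← div_eq_mul_inv, le_div_iff₀' (by positivity)]
        calc (1 + t ^ 2 + ‖μ‖ ^ 2) * ‖t⁻¹ • f (t⁻¹ • μ)‖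
            ≤ 2 * (t ^ 2 + ‖μ‖ ^ 2) * ‖t⁻¹ • f (t⁻¹ • μ)‖ := by
              gcongr
              linarith [sq_nonneg ‖μ‖]
          _ ≤ 2 * K * ‖μ - t • a‖ := by
              linarith [sq_add_norm_sq_mul_norm_inv_smul_le weighted_sq μ t_ne_zero]
    _ ≤ _ := by
        gcongr
        exact inv_one_add_sq_add_sq_le_min_inv_sqrt_sq t ‖μ‖

end

/-- The pointwise bound on `(1/Φ)·η̂(μ/Φ)` for a Schwartz function `g = η̂` with `g(−1) = 0`,
used in the proof of Proposition 3.3: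
`|(1/Φ) g(μ/Φ)| ≲ ⟨μ+Φ⟩ min(⟨Φ⟩^{−1}, ⟨μ⟩^{−1})²`. -/
theorem schwartz_rescaled_bound (g : SchwartzMap ℝ ℂ) (hg : g (-1) = 0) :
    ∃ C > 0, ∀ (μ : ℝ) (Φ : ℤ), Φ ≠ 0 →
      ‖(1 / (Φ : ℂ)) * g (μ / (Φ : ℝ))‖ ≤
        C * Real.sqrt (1 + (μ + (Φ : ℝ)) ^ 2) *
          (min (Real.sqrt (1 + (Φ : ℝ) ^ 2))⁻¹ (Real.sqrt (1 + μ ^ 2))⁻¹) ^ 2 := by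
  obtain ⟨C, hC, bound⟩ := schwartz_rescaled_bound_general g hg
  exact ⟨C, hC, fun μ Φ hΦ ↦ by
    simpa [div_eq_inv_mul, norm_smul] using bound μ Φ (mod_cast Int.one_le_abs hΦ)⟩
end

section
/- Let M ≥ 1 and let ψ: ℝ → ℂ satisfy: ψ(−1) = −1; |ψ(x)| ≤ M·⟨x⟩^{−1} for all x ∈ ℝ; and |x·ψ(x) − y·ψ(y)| ≤ M·|x−y| for all x, y ∈ ℝ. Then there exists an absolute constant C > 0 such that for every real μ with |μ| ≥ 1 and every nonzero integer Φ: |1/μ − (1/Φ)·ψ(μ/Φ)| ≤ C·M·⟨μ+Φ⟩·⟨μ⟩^{−1}·min(⟨Φ⟩^{−1}, ⟨μ⟩^{−1}). -/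
/-!
With `g x = x • ψ x` the multiplier difference is `μ⁻¹ • (g (-1) - g (μ / Φ))`. The
Lipschitz bound at `-1` controls the increment of `g` by `M * |μ + Φ| / |Φ|`, which is good when
`|μ| ≲ |Φ|`; the bound `‖g‖ ≤ M` controls it by `2 * M`, which is good when `|Φ| ≪ |μ|`, since then
`|μ + Φ|` is comparable to `|μ|`. Together they give the factor `|μ + Φ| / max |Φ| |μ|`, and since
`1 ≤ |μ|` both `⟨Φ⟩` and `⟨μ⟩` are at most `√2 * max |Φ| |μ|`.
-/

theorem abs_le_sqrt_one_add_sq (x : ℝ) : |x| ≤ √(1 + x ^ 2) :=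
  Real.abs_le_sqrt (by linarith)

theorem sqrt_one_add_sq_le_sqrt_two_mul {x R : ℝ} (hR : 1 ≤ R) (hx : |x| ≤ R) :
    √(1 + x ^ 2) ≤ √2 * R := by
  have hx_sq : x ^ 2 ≤ R ^ 2 := sq_le_sq' (abs_le.mp hx).1 (abs_le.mp hx).2
  have hR_sq : 1 ≤ R ^ 2 := one_le_pow₀ hR
  calc √(1 + x ^ 2) ≤ √(2 * R ^ 2) := Real.sqrt_le_sqrt (by linarith)
    _ = √2 * R := by rw [Real.sqrt_mul zero_le_two, Real.sqrt_sq (by linarith)]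

theorem norm_sub_mul_one_add_le {E : Type*} [SeminormedAddCommGroup E] {u v : E} {M r : ℝ}
    (hr : 0 ≤ r) (hu : ‖u‖ ≤ M) (hv : ‖v‖ ≤ M) (huv : ‖u - v‖ ≤ M * r) :
    ‖u - v‖ * (1 + r) ≤ 3 * M * r := by
  have h_far : ‖u - v‖ ≤ 2 * M := (norm_sub_le u v).trans (by linarith)
  calc ‖u - v‖ * (1 + r) = ‖u - v‖ + ‖u - v‖ * r := by ring
    _ ≤ M * r + 2 * M * r := by gcongr
    _ = 3 * M * r := by ring

section NormedSpace

variable {E : Type*} [SeminormedAddCommGroup E] [NormedSpace ℝ E]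

theorem norm_smul_le_of_norm_le_mul_inv_sqrt {x M : ℝ} {v : E}
    (hv : ‖v‖ ≤ M * (√(1 + x ^ 2))⁻¹) : ‖x • v‖ ≤ M := by
  have h_pos : 0 < √(1 + x ^ 2) := by positivity
  calc ‖x • v‖ = |x| * ‖v‖ := by rw [norm_smul, Real.norm_eq_abs]
    _ ≤ √(1 + x ^ 2) * ‖v‖ := by gcongr; exact abs_le_sqrt_one_add_sq x
    _ ≤ M := by rwa [← div_eq_mul_inv, le_div_iff₀' h_pos] at hv

theorem inv_smul_add_inv_smul {μ : ℝ} (hμ : μ ≠ 0) (Φ : ℝ) (u v : E) :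
    μ⁻¹ • u + Φ⁻¹ • v = μ⁻¹ • ((μ / Φ) • v + u) := by
  rw [smul_add, smul_smul, div_eq_mul_inv, inv_mul_cancel_left₀ hμ, add_comm]

variable {ψ : ℝ → E} {M : ℝ}

theorem norm_smul_div_add_mul_max_le (hbdd : ∀ x : ℝ, ‖x • ψ x‖ ≤ M)
    (hlip : ∀ x : ℝ, ‖x • ψ x + ψ (-1)‖ ≤ M * |x + 1|) (μ : ℝ) {Φ : ℝ} (hΦ : Φ ≠ 0) :
    ‖(μ / Φ) • ψ (μ / Φ) + ψ (-1)‖ * max |Φ| |μ| ≤ 3 * M * |μ + Φ| := by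
  have h_scale : |μ / Φ + 1| * |Φ| = |μ + Φ| := by
    rw [← abs_mul, add_mul, div_mul_cancel₀ μ hΦ, one_mul]
  have h_max : max |Φ| |μ| ≤ (1 + |μ / Φ + 1|) * |Φ| := by
    have h_triangle : |μ| ≤ |μ + Φ| + |Φ| := by simpa using abs_sub (μ + Φ) Φ
    rw [add_mul, h_scale, one_mul]
    exact max_le (by linarith [abs_nonneg (μ + Φ)]) (by linarith)
  have h_increment : ‖(μ / Φ) • ψ (μ / Φ) + ψ (-1)‖ * (1 + |μ / Φ + 1|) ≤
      3 * M * |μ / Φ + 1| := by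
    have h_base : ‖-ψ (-1)‖ ≤ M := by simpa using hbdd (-1)
    simpa using norm_sub_mul_one_add_le (abs_nonneg _) (hbdd (μ / Φ)) h_base
      (by simpa using hlip (μ / Φ))
  calc ‖(μ / Φ) • ψ (μ / Φ) + ψ (-1)‖ * max |Φ| |μ|
      ≤ ‖(μ / Φ) • ψ (μ / Φ) + ψ (-1)‖ * ((1 + |μ / Φ + 1|) * |Φ|) := by gcongr
    _ = ‖(μ / Φ) • ψ (μ / Φ) + ψ (-1)‖ * (1 + |μ / Φ + 1|) * |Φ| := by ring
    _ ≤ 3 * M * |μ / Φ + 1| * |Φ| := by gcongr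
    _ = 3 * M * |μ + Φ| := by rw [mul_assoc, h_scale]

theorem multiplier_difference_bound_general (hbdd : ∀ x : ℝ, ‖x • ψ x‖ ≤ M)
    (hlip : ∀ x : ℝ, ‖x • ψ x + ψ (-1)‖ ≤ M * |x + 1|) {μ Φ : ℝ} (hμ : 1 ≤ |μ|) (hΦ : Φ ≠ 0) :
    ‖μ⁻¹ • ψ (-1) + Φ⁻¹ • ψ (μ / Φ)‖ ≤
      6 * M * √(1 + (μ + Φ) ^ 2) * (√(1 + μ ^ 2))⁻¹ *
        min (√(1 + Φ ^ 2))⁻¹ (√(1 + μ ^ 2))⁻¹ := by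
  have hM : 0 ≤ M := (norm_nonneg _).trans (hbdd 0)
  have hμ_pos : 0 < |μ| := one_pos.trans_le hμ
  have h_bracket : √(1 + μ ^ 2) ≤ √2 * |μ| := sqrt_one_add_sq_le_sqrt_two_mul hμ le_rfl
  have h_bracket_max : max (√(1 + Φ ^ 2)) (√(1 + μ ^ 2)) ≤ √2 * max |Φ| |μ| := by
    have h_one_le : 1 ≤ max |Φ| |μ| := le_max_of_le_right hμ
    exact max_le (sqrt_one_add_sq_le_sqrt_two_mul h_one_le (le_max_left _ _))
      (sqrt_one_add_sq_le_sqrt_two_mul h_one_le (le_max_right _ _))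
  have h_min : min (√(1 + Φ ^ 2))⁻¹ (√(1 + μ ^ 2))⁻¹ =
      (max (√(1 + Φ ^ 2)) (√(1 + μ ^ 2)))⁻¹ :=
    (antitoneOn_inv_pos.map_max (Real.sqrt_pos.mpr (by positivity : 0 < 1 + Φ ^ 2))
      (Real.sqrt_pos.mpr (by positivity : 0 < 1 + μ ^ 2))).symm
  rw [inv_smul_add_inv_smul (abs_pos.mp hμ_pos), norm_smul, norm_inv, Real.norm_eq_abs, h_min,
    mul_assoc, ← mul_inv, ← div_eq_mul_inv, le_div_iff₀ (by positivity)]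
  set δ := ‖(μ / Φ) • ψ (μ / Φ) + ψ (-1)‖
  calc |μ|⁻¹ * δ * (√(1 + μ ^ 2) * max (√(1 + Φ ^ 2)) (√(1 + μ ^ 2)))
      ≤ |μ|⁻¹ * δ * (√2 * |μ| * (√2 * max |Φ| |μ|)) := by gcongr
    _ = 2 * (δ * max |Φ| |μ|) := by
      field_simp
      rw [Real.sq_sqrt zero_le_two]
    _ ≤ 2 * (3 * M * |μ + Φ|) :=
      mul_le_mul_of_nonneg_left (norm_smul_div_add_mul_max_le hbdd hlip μ hΦ) zero_le_two
    _ ≤ 2 * (3 * M * √(1 + (μ + Φ) ^ 2)) := by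
      gcongr
      exact abs_le_sqrt_one_add_sq _
    _ = 6 * M * √(1 + (μ + Φ) ^ 2) := by ring

end NormedSpace

/-- The pointwise multiplier bound used in the proof of Proposition 3.3 (contribution I₃):
for `ψ` with `ψ(−1) = −1`, decay `|ψ(x)| ≤ M⟨x⟩^{−1}` and Lipschitz bound
`|xψ(x) − yψ(y)| ≤ M|x−y|`, one has
`|1/μ − (1/Φ)ψ(μ/Φ)| ≤ C M ⟨μ+Φ⟩ ⟨μ⟩^{−1} min(⟨Φ⟩^{−1}, ⟨μ⟩^{−1})` for `|μ| ≥ 1`,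
with an absolute constant `C`. -/
theorem multiplier_difference_bound :
    ∃ C > 0, ∀ (M : ℝ) (ψ : ℝ → ℂ), 1 ≤ M →
      ψ (-1) = -1 →
      (∀ x : ℝ, ‖ψ x‖ ≤ M * (Real.sqrt (1 + x ^ 2))⁻¹) →
      (∀ x y : ℝ, ‖(x : ℂ) * ψ x - (y : ℂ) * ψ y‖ ≤ M * |x - y|) →
      ∀ (μ : ℝ) (Φ : ℤ), 1 ≤ |μ| → Φ ≠ 0 →
        ‖1 / (μ : ℂ) - (1 / (Φ : ℂ)) * ψ (μ / (Φ : ℝ))‖ ≤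
          C * M * Real.sqrt (1 + (μ + (Φ : ℝ)) ^ 2) * (Real.sqrt (1 + μ ^ 2))⁻¹ *
            min (Real.sqrt (1 + (Φ : ℝ) ^ 2))⁻¹ (Real.sqrt (1 + μ ^ 2))⁻¹ := by
  refine ⟨6, by norm_num, fun M ψ _ hψ hdecay hlip μ Φ hμ hΦ ↦ ?_⟩
  have hbdd (x : ℝ) : ‖x • ψ x‖ ≤ M := norm_smul_le_of_norm_le_mul_inv_sqrt (hdecay x)
  have hlip_neg_one (x : ℝ) : ‖x • ψ x + ψ (-1)‖ ≤ M * |x + 1| := by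
    simpa using hlip x (-1)
  rw [← norm_neg]
  simpa [hψ, neg_add_eq_sub] using
    multiplier_difference_bound_general hbdd hlip_neg_one hμ (Int.cast_ne_zero.mpr hΦ)
end
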